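/- arXiv:2212.05433 — 3 statements merged into one kernel-verified Lean document; each statement's English description precedes it below -/
import Mathlib

section
/- (P-node partition.) Let M be a node partitioned into nodes N_1, …, N_k with k ≥ 2. Assume every vertex is compatible with M, and assume (the P-node property) that every vertex v with Cl(v) ⊊ M satisfies Cl(v) ⊆ N_i for some i ∈ [k]. Then the sets middle_M(N_1) ∪ inner(N_1), …, middle_M(N_k) ∪ inner(N_k) are pairwise disjoint subsets of inner(M), and every I ∈ inner(M) belongs to exactly one of them. -/
open Set

variable {Λ W ι : Type*}

/-- The clique of a leaf: vertices whose `Cl`-set contains the leaf. -/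
def leafC (Cl : W → Set Λ) (ℓ : Λ) : Set W := {v | ℓ ∈ Cl v}

/-- `V(N)`: vertices with `Cl(v) ⊆ N`. -/
def Vset (Cl : W → Set Λ) (N : Set Λ) : Set W := {v | Cl v ⊆ N}

/-- `U(N)`: vertices with `Cl(v) = N`. -/
def Uset (Cl : W → Set Λ) (N : Set Λ) : Set W := {v | Cl v = N}

/-- `I(N)`: vertices with `Cl(v) ⊊ N`. -/
def Iset (Cl : W → Set Λ) (N : Set Λ) : Set W := {v | Cl v ⊂ N}

/-- `E(N)`: vertices with `N ⊊ Cl(v)`. -/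
def Eset (Cl : W → Set Λ) (N : Set Λ) : Set W := {v | N ⊂ Cl v}

/-- A vertex is compatible with a node `N`. -/
def Compatible (Cl : W → Set Λ) (v : W) (N : Set Λ) : Prop :=
  Cl v ⊆ N ∨ N ⊆ Cl v ∨ Cl v ∩ N = ∅

/-- `inner(N)`: for a singleton node `{ℓ}` the components with `C(I) = C(ℓ)`;
for a non-singleton node the components with `C(I) ∩ I(N) ≠ ∅` and
`U(N) ∪ E(N) ⊊ C(I)`. -/
def innerSet (Cl : W → Set Λ) (CI : ι → Set W) (N : Set Λ) : Set ι :=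
  {I | (∃ ℓ, N = {ℓ} ∧ CI I = leafC Cl ℓ) ∨
       ((¬ ∃ ℓ, N = {ℓ}) ∧ (CI I ∩ Iset Cl N).Nonempty ∧
        Uset Cl N ∪ Eset Cl N ⊂ CI I)}

/-- `middle_M(N) = {I ∈ inner(M) \ inner(N) : C(I) ∩ V(N) ≠ ∅}`. -/
def middleSet (Cl : W → Set Λ) (CI : ι → Set W) (M N : Set Λ) : Set ι :=
  {I | I ∈ innerSet Cl CI M ∧ I ∉ innerSet Cl CI N ∧ (CI I ∩ Vset Cl N).Nonempty}

/-!
A component of `inner(N)` contains every vertex whose `Cl`-set contains `N`, also when `N` is a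
singleton. So, for a part `N ⊊ M`, such a component is in `inner(M)` as soon as it contains a vertex
`v` with `Cl(v) ⊆ N`. It does: for `N = {ℓ}`, incomparability of the leaf cliques gives a vertex of
`C(ℓ)` whose `Cl`-set omits another leaf of `M`; compatibility with `M` puts that `Cl`-set strictly
inside `M`, and the P-node property then puts it inside `N`. Hence
`middle_M(N) ∪ inner(N) = {I ∈ inner(M) : C(I) ∩ V(N) ≠ ∅}`.
The Helly condition prevents `C(I)` from meeting `V(N)` for two disjoint `N`, while the P-node
property, applied to a vertex of `C(I) ∩ I(M)`, provides one `N`.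
-/

section Parts

variable {κ : Type*} {s : Set κ} {N : κ → Set Λ}

lemma ssubset_biUnion_of_pairwiseDisjoint (hs : s.Nontrivial) (hne : ∀ i ∈ s, (N i).Nonempty)
    (hdisj : s.PairwiseDisjoint N) {i : κ} (hi : i ∈ s) : N i ⊂ ⋃ j ∈ s, N j := by
  obtain ⟨j, hj, hji⟩ := hs.exists_ne i
  obtain ⟨x, hx⟩ := hne j hj
  exact (ssubset_iff_of_subset (subset_biUnion_of_mem hi)).2
    ⟨x, mem_biUnion hj hx, (hdisj hj hi hji).notMem_of_mem_left hx⟩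

lemma nontrivial_biUnion_of_pairwiseDisjoint (hs : s.Nontrivial) (hne : ∀ i ∈ s, (N i).Nonempty)
    (hdisj : s.PairwiseDisjoint N) : (⋃ i ∈ s, N i).Nontrivial := by
  obtain ⟨i, hi, j, hj, hij⟩ := hs
  obtain ⟨x, hx⟩ := hne i hi
  obtain ⟨y, hy⟩ := hne j hj
  exact ⟨x, mem_biUnion hi hx, y, mem_biUnion hj hy, (hdisj hi hj hij).ne_of_mem hx hy⟩

lemma subset_of_pairwiseDisjoint_of_inter_nonempty (hdisj : s.PairwiseDisjoint N) {i : κ}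
    (hi : i ∈ s) {A : Set Λ} (hA : ∃ j ∈ s, A ⊆ N j) (hAi : (A ∩ N i).Nonempty) : A ⊆ N i := by
  obtain ⟨j, hj, hAj⟩ := hA
  obtain ⟨ℓ, hℓA, hℓi⟩ := hAi
  rwa [hdisj.elim_set hi hj ℓ hℓi (hAj hℓA)]

end Parts

lemma intersecting_of_nonempty_sInter {𝒜 : Set (Set Λ)} (h : (⋂₀ 𝒜).Nonempty) :
    𝒜.Intersecting := by
  obtain ⟨x, hx⟩ := h
  exact fun A hA B hB => not_disjoint_iff.2 ⟨x, hx A hA, hx B hB⟩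

section Nodes

variable {Cl : W → Set Λ} {CI : ι → Set W} {M N : Set Λ} {I : ι}

lemma Compatible.ssubset {v : W} (h : Compatible Cl v M) (hmeet : (Cl v ∩ M).Nonempty)
    (hM : ¬ M ⊆ Cl v) : Cl v ⊂ M := by
  rcases h with h | h | h
  · exact ⟨h, hM⟩
  · exact absurd h hM
  · exact absurd h hmeet.ne_empty

lemma exists_mem_leafC_ssubset (hM : M.Nontrivial)
    (hleaf : M.Pairwise fun ℓ ℓ' => ¬ leafC Cl ℓ ⊆ leafC Cl ℓ')
    (hcompat : ∀ v, Compatible Cl v M) {ℓ : Λ} (hℓ : ℓ ∈ M) : ∃ v ∈ leafC Cl ℓ, Cl v ⊂ M := by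
  obtain ⟨x, hxM, hxℓ⟩ := hM.exists_ne ℓ
  obtain ⟨v, hvℓ, hvx⟩ := not_subset.1 (hleaf hℓ hxM hxℓ.symm)
  exact ⟨v, hvℓ, (hcompat v).ssubset ⟨ℓ, hvℓ, hℓ⟩ fun h => hvx (h hxM)⟩

lemma not_disjoint_of_inter_Vset_nonempty {C : Set W} {N' : Set Λ}
    (hC : (Cl '' C).Intersecting) (hN : (C ∩ Vset Cl N).Nonempty)
    (hN' : (C ∩ Vset Cl N').Nonempty) : ¬ Disjoint N N' := by
  obtain ⟨v, hvC, hvN⟩ := hN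
  obtain ⟨w, hwC, hwN'⟩ := hN'
  exact fun h => hC (mem_image_of_mem Cl hvC) (mem_image_of_mem Cl hwC) (h.mono hvN hwN')

lemma Uset_union_Eset : Uset Cl N ∪ Eset Cl N = {v | N ⊆ Cl v} := by
  ext v
  exact (or_congr_left eq_comm).trans le_iff_eq_or_lt.symm

lemma setOf_subset_Cl_subset_of_mem_innerSet (hI : I ∈ innerSet Cl CI N) :
    {v | N ⊆ Cl v} ⊆ CI I := by
  rcases hI with ⟨ℓ, rfl, hC⟩ | ⟨-, -, hUE⟩
  · simp only [hC, singleton_subset_iff, leafC, Subset.rfl]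
  · exact Uset_union_Eset ▸ hUE.subset

-- Properness of `U(M) ∪ E(M) ⊆ C(I)` is automatic, since `I(M)` is disjoint from `U(M) ∪ E(M)`.
lemma mem_innerSet_iff_of_nontrivial (hM : M.Nontrivial) :
    I ∈ innerSet Cl CI M ↔ (CI I ∩ Iset Cl M).Nonempty ∧ {v | M ⊆ Cl v} ⊆ CI I := by
  have hMs : ¬ ∃ ℓ, M = {ℓ} := fun ⟨_, h⟩ => hM.ne_singleton h
  constructor
  · intro hI
    refine ⟨?_, setOf_subset_Cl_subset_of_mem_innerSet hI⟩
    exact hI.elim (fun ⟨ℓ, h, _⟩ => absurd ⟨ℓ, h⟩ hMs) (·.2.1)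
  · rintro ⟨⟨v, hvC, hvM⟩, hsub⟩
    refine .inr ⟨hMs, ⟨v, hvC, hvM⟩, ?_⟩
    rw [Uset_union_Eset]
    exact ⟨hsub, fun h => hvM.2 (h hvC)⟩

lemma mem_innerSet_of_ssubset (hM : M.Nontrivial) (hNM : N ⊂ M) (hI : I ∈ innerSet Cl CI N)
    (hV : (CI I ∩ Vset Cl N).Nonempty) : I ∈ innerSet Cl CI M := by
  obtain ⟨v, hvC, hvN⟩ := hV
  exact (mem_innerSet_iff_of_nontrivial hM).2 ⟨⟨v, hvC, ssubset_of_subset_of_ssubset hvN hNM⟩,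
    fun _ hw => setOf_subset_Cl_subset_of_mem_innerSet hI (hNM.subset.trans hw)⟩

lemma inter_Vset_nonempty_of_mem_innerSet (hM : M.Nontrivial) (hNM : N ⊆ M)
    (hleaf : M.Pairwise fun ℓ ℓ' => ¬ leafC Cl ℓ ⊆ leafC Cl ℓ')
    (hcompat : ∀ v, Compatible Cl v M)
    (hN : ∀ v, Cl v ⊂ M → (Cl v ∩ N).Nonempty → Cl v ⊆ N)
    (hI : I ∈ innerSet Cl CI N) : (CI I ∩ Vset Cl N).Nonempty := by
  rcases hI with ⟨ℓ, rfl, hC⟩ | ⟨-, ⟨v, hvC, hvN⟩, -⟩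
  · obtain ⟨v, hvℓ, hvM⟩ := exists_mem_leafC_ssubset hM hleaf hcompat (hNM rfl)
    exact ⟨v, hC ▸ hvℓ, hN v hvM ⟨ℓ, hvℓ, rfl⟩⟩
  · exact ⟨v, hvC, hvN.1⟩

/-- The class `middle_M(N) ∪ inner(N)` attached to a part `N` of the node `M`; over the parts of a
P-node these classes partition `inner(M)`. -/
def partSet (Cl : W → Set Λ) (CI : ι → Set W) (M N : Set Λ) : Set ι :=
  middleSet Cl CI M N ∪ innerSet Cl CI N

lemma partSet_eq_setOf_inter_Vset_nonempty (hM : M.Nontrivial) (hNM : N ⊂ M)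
    (hleaf : M.Pairwise fun ℓ ℓ' => ¬ leafC Cl ℓ ⊆ leafC Cl ℓ')
    (hcompat : ∀ v, Compatible Cl v M)
    (hN : ∀ v, Cl v ⊂ M → (Cl v ∩ N).Nonempty → Cl v ⊆ N) :
    partSet Cl CI M N = {I ∈ innerSet Cl CI M | (CI I ∩ Vset Cl N).Nonempty} := by
  ext I
  constructor
  · rintro (⟨hIM, -, hV⟩ | hI)
    · exact ⟨hIM, hV⟩
    · have hV := inter_Vset_nonempty_of_mem_innerSet hM hNM.subset hleaf hcompat hN hI
      exact ⟨mem_innerSet_of_ssubset hM hNM hI hV, hV⟩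
  · rintro ⟨hIM, hV⟩
    by_cases hI : I ∈ innerSet Cl CI N
    · exact .inr hI
    · exact .inl ⟨hIM, hI, hV⟩

theorem stmt5_general {κ : Type*} {s : Set κ} {N : κ → Set Λ} (hM : M.Nontrivial)
    (hNM : ∀ i ∈ s, N i ⊂ M) (hdisj : s.PairwiseDisjoint N)
    (hleaf : M.Pairwise fun ℓ ℓ' => ¬ leafC Cl ℓ ⊆ leafC Cl ℓ')
    (hcompat : ∀ v, Compatible Cl v M)
    (hCI : ∀ I, (Cl '' CI I).Intersecting)
    (hP : ∀ v, Cl v ⊂ M → ∃ i ∈ s, Cl v ⊆ N i) :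
    (∀ i ∈ s, partSet Cl CI M (N i) ⊆ innerSet Cl CI M) ∧
    (s.PairwiseDisjoint fun i => partSet Cl CI M (N i)) ∧
    ∀ I ∈ innerSet Cl CI M, ∃! i, i ∈ s ∧ I ∈ partSet Cl CI M (N i) := by
  have hpart : ∀ i ∈ s, partSet Cl CI M (N i) =
      {I ∈ innerSet Cl CI M | (CI I ∩ Vset Cl (N i)).Nonempty} := fun i hi =>
    partSet_eq_setOf_inter_Vset_nonempty hM (hNM i hi) hleaf hcompat fun v hv =>
      subset_of_pairwiseDisjoint_of_inter_nonempty hdisj hi (hP v hv)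
  have hpartdisj : s.PairwiseDisjoint fun i => partSet Cl CI M (N i) := by
    refine fun i hi j hj hij => disjoint_left.2 fun I hIi hIj => ?_
    exact not_disjoint_of_inter_Vset_nonempty (hCI I) ((hpart i hi).subset hIi).2
      ((hpart j hj).subset hIj).2 (hdisj hi hj hij)
  refine ⟨fun i hi => hpart i hi ▸ sep_subset _ _, hpartdisj, fun I hI => ?_⟩
  obtain ⟨v, hvC, hvM⟩ := ((mem_innerSet_iff_of_nontrivial hM).1 hI).1
  obtain ⟨i, hi, hvi⟩ := hP v hvM
  have hIi : I ∈ partSet Cl CI M (N i) := hpart i hi ▸ ⟨hI, v, hvC, hvi⟩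
  exact ⟨i, ⟨hi, hIi⟩, fun j ⟨hj, hIj⟩ => hpartdisj.elim_set hj hi I hIj hIi⟩

end Nodes

theorem stmt5 [Fintype Λ] [Fintype W] [Fintype ι]
    (Cl : W → Set Λ) (CI : ι → Set W)
    (hCl : ∀ v, (Cl v).Nonempty)
    (hleaf : ∀ ℓ ℓ' : Λ, ℓ ≠ ℓ' → ¬ leafC Cl ℓ ⊆ leafC Cl ℓ')
    (hCI : ∀ I, (CI I).Nonempty)
    (hHelly : ∀ I, (⋂ v ∈ CI I, Cl v).Nonempty)
    (M : Set Λ) (hMne : M.Nonempty)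
    (k : ℕ) (hk : 2 ≤ k)
    (N : ℕ → Set Λ)
    (hNne : ∀ i ∈ Set.Icc 1 k, (N i).Nonempty)
    (hNdisj : ∀ i ∈ Set.Icc 1 k, ∀ j ∈ Set.Icc 1 k, i ≠ j → N i ∩ N j = ∅)
    (hNunion : (⋃ i ∈ Set.Icc 1 k, N i) = M)
    (hcompat : ∀ v, Compatible Cl v M)
    (hP : ∀ v, Cl v ⊂ M → ∃ i ∈ Set.Icc 1 k, Cl v ⊆ N i) :
    (∀ i ∈ Set.Icc 1 k,
        middleSet Cl CI M (N i) ∪ innerSet Cl CI (N i) ⊆ innerSet Cl CI M) ∧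
    (∀ i ∈ Set.Icc 1 k, ∀ j ∈ Set.Icc 1 k, i ≠ j →
        (middleSet Cl CI M (N i) ∪ innerSet Cl CI (N i)) ∩
          (middleSet Cl CI M (N j) ∪ innerSet Cl CI (N j)) = ∅) ∧
    (∀ I ∈ innerSet Cl CI M,
        ∃! i, i ∈ Set.Icc 1 k ∧
          I ∈ middleSet Cl CI M (N i) ∪ innerSet Cl CI (N i)) := by
  subst hNunion
  have hIcc : (Set.Icc 1 k).Nontrivial :=
    nontrivial_of_lt (left_mem_Icc.2 (by lia)) (right_mem_Icc.2 (by lia)) (hk : 1 < k)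
  have hdisj : (Set.Icc 1 k).PairwiseDisjoint N := fun i hi j hj hij =>
    disjoint_iff_inter_eq_empty.2 (hNdisj i hi j hj hij)
  have hinter (I : ι) : (Cl '' CI I).Intersecting :=
    intersecting_of_nonempty_sInter (by simpa only [sInter_image] using hHelly I)
  obtain ⟨hsub, hpartdisj, hunique⟩ := stmt5_general
    (nontrivial_biUnion_of_pairwiseDisjoint hIcc hNne hdisj)
    (fun _ => ssubset_biUnion_of_pairwiseDisjoint hIcc hNne hdisj) hdisj
    (fun ℓ _ ℓ' _ => hleaf ℓ ℓ') hcompat hinter hP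
  exact ⟨hsub, fun i hi j hj hij => (hpartdisj hi hj hij).inter_eq, hunique⟩
end

section
/- Let I ∈ rest(Q) and let J ∈ middle_Q(N_i) ∪ inner(N_i) for some i ∈ [k]. Then C(J) is not a subset of C(I). (Hence, in any order refining inclusion of the sets C(·), a rest-component I and a component J ∈ middle_Q(N_i) ∪ inner(N_i) can only be comparable with I below J.) -/
open Set

variable {Λ W ι : Type*}

/-- `J(v) = {i ∈ [k] : N_i ⊆ Cl(v)}`. -/
def Jnat (Cl : W → Set Λ) (N : ℕ → Set Λ) (k : ℕ) (v : W) : Set ℕ :=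
  {i | i ∈ Set.Icc 1 k ∧ N i ⊆ Cl v}

/-- `I'(Q) = I(Q) \ ⋃ᵢ V(Nᵢ)`. -/
def IprimeQ (Cl : W → Set Λ) (Q : Set Λ) (N : ℕ → Set Λ) (k : ℕ) : Set W :=
  Iset Cl Q \ ⋃ i ∈ Set.Icc 1 k, Vset Cl (N i)

/-- `rest(Q) = inner(Q) \ ⋃ᵢ (middle_Q(Nᵢ) ∪ inner(Nᵢ))`. -/
def restQ (Cl : W → Set Λ) (CI : ι → Set W) (Q : Set Λ) (N : ℕ → Set Λ) (k : ℕ) : Set ι :=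
  innerSet Cl CI Q \
    ⋃ i ∈ Set.Icc 1 k, (middleSet Cl CI Q (N i) ∪ innerSet Cl CI (N i))

/-- `J(I) = ⋂_{v ∈ C(I) ∩ I'(Q)} J(v)`. -/
def JIset (Cl : W → Set Λ) (CI : ι → Set W) (Q : Set Λ) (N : ℕ → Set Λ) (k : ℕ)
    (I : ι) : Set ℕ :=
  ⋂ v ∈ CI I ∩ IprimeQ Cl Q N k, Jnat Cl N k v

/-- A set of naturals is an interval (order-convex). -/
def IsIntervalIn (s : Set ℕ) : Prop :=
  ∀ a b c : ℕ, a ≤ b → b ≤ c → a ∈ s → c ∈ s → b ∈ s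

/-- `j₁`, the left endpoint of `J(I)`. -/
noncomputable def jLo (Cl : W → Set Λ) (CI : ι → Set W) (Q : Set Λ) (N : ℕ → Set Λ)
    (k : ℕ) (I : ι) : ℕ :=
  sInf (JIset Cl CI Q N k I)

/-- `j₂`, the right endpoint of `J(I)`. -/
noncomputable def jHi (Cl : W → Set Λ) (CI : ι → Set W) (Q : Set Λ) (N : ℕ → Set Λ)
    (k : ℕ) (I : ι) : ℕ :=
  sSup (JIset Cl CI Q N k I)

/-- `I ∈ rest(Q)` with `J(I) = [j₁, j₂]` is discarded if there are
`v, v' ∈ I'(Q) ∖ C(I)` with `{j₁−1, j₁} ⊆ J(v)` and `{j₂, j₂+1} ⊆ J(v')`. -/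
def Discarded (Cl : W → Set Λ) (CI : ι → Set W) (Q : Set Λ) (N : ℕ → Set Λ)
    (k : ℕ) (I : ι) : Prop :=
  (∃ v ∈ IprimeQ Cl Q N k \ CI I,
      jLo Cl CI Q N k I - 1 ∈ Jnat Cl N k v ∧ jLo Cl CI Q N k I ∈ Jnat Cl N k v) ∧
  (∃ v ∈ IprimeQ Cl Q N k \ CI I,
      jHi Cl CI Q N k I ∈ Jnat Cl N k v ∧ jHi Cl CI Q N k I + 1 ∈ Jnat Cl N k v)

/-- `outer(Nᵢ)`: the non-discarded components of `rest(Q)` assigned to `Nᵢ`. -/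
def outerSet (Cl : W → Set Λ) (CI : ι → Set W) (Q : Set Λ) (N : ℕ → Set Λ)
    (k : ℕ) (i : ℕ) : Set ι :=
  {I | I ∈ restQ Cl CI Q N k ∧ ¬ Discarded Cl CI Q N k I ∧
    ((jLo Cl CI Q N k I = jHi Cl CI Q N k I ∧ i = jLo Cl CI Q N k I) ∨
     (jLo Cl CI Q N k I < jHi Cl CI Q N k I ∧ i = jLo Cl CI Q N k I ∧
       ¬ ∃ v ∈ IprimeQ Cl Q N k \ CI I,
           jLo Cl CI Q N k I - 1 ∈ Jnat Cl N k v ∧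
           jLo Cl CI Q N k I ∈ Jnat Cl N k v) ∨
     (jLo Cl CI Q N k I < jHi Cl CI Q N k I ∧ i = jHi Cl CI Q N k I ∧
       ¬ ∃ v ∈ IprimeQ Cl Q N k \ CI I,
           jHi Cl CI Q N k I ∈ Jnat Cl N k v ∧
           jHi Cl CI Q N k I + 1 ∈ Jnat Cl N k v))}

/-- `comp(Nᵢ) = middle_Q(Nᵢ) ∪ inner(Nᵢ) ∪ outer(Nᵢ)`. -/
def compSet (Cl : W → Set Λ) (CI : ι → Set W) (Q : Set Λ) (N : ℕ → Set Λ)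
    (k : ℕ) (i : ℕ) : Set ι :=
  middleSet Cl CI Q (N i) ∪ innerSet Cl CI (N i) ∪ outerSet Cl CI Q N k i

/-- The relation `⊑_Q` on (indices of) children of the Q-node: for `a < b`,
`N_a ⊑_Q N_b` iff some `v ∈ I'(Q)` has `a ∉ J(v)` and `{b, b+1} ⊆ J(v)`; for
`b < a`, `N_a ⊑_Q N_b` iff some `v ∈ I'(Q)` has `{b−1, b} ⊆ J(v)` and `a ∉ J(v)`. -/
def sqQN (Cl : W → Set Λ) (Q : Set Λ) (N : ℕ → Set Λ) (k : ℕ) (a b : ℕ) : Prop :=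
  (a < b ∧ ∃ v ∈ IprimeQ Cl Q N k,
      a ∉ Jnat Cl N k v ∧ b ∈ Jnat Cl N k v ∧ b + 1 ∈ Jnat Cl N k v) ∨
  (b < a ∧ ∃ v ∈ IprimeQ Cl Q N k,
      b - 1 ∈ Jnat Cl N k v ∧ b ∈ Jnat Cl N k v ∧ a ∉ Jnat Cl N k v)

/-!
Let `N = N_i`. Every component of `middle_Q(N) ∪ inner(N)` meets `V(N)`, except that for `N = {ℓ}`
it may instead be the leaf clique `C(ℓ)`. Both features pass to a component of `inner(Q)` with a
larger vertex set: meeting `V(N)` trivially, and being `C(ℓ)` because `C(ℓ)` is maximal among the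
Helly sets, as leaf cliques are pairwise incomparable. So such a larger component again lies in
`middle_Q(N) ∪ inner(N)`, and hence not in `rest(Q)`.
-/

theorem subset_leafC_iff {Cl : W → Set Λ} {S : Set W} {ℓ : Λ} :
    S ⊆ leafC Cl ℓ ↔ ℓ ∈ ⋂ v ∈ S, Cl v :=
  mem_iInter₂.symm

theorem eq_leafC_of_leafC_subset {Cl : W → Set Λ} {S : Set W} {ℓ : Λ}
    (hℓ : ∀ ℓ', ℓ ≠ ℓ' → ¬ leafC Cl ℓ ⊆ leafC Cl ℓ')
    (hHelly : (⋂ v ∈ S, Cl v).Nonempty) (hS : leafC Cl ℓ ⊆ S) :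
    S = leafC Cl ℓ := by
  obtain ⟨ℓ', hℓ'⟩ := hHelly
  have hSℓ' : S ⊆ leafC Cl ℓ' := subset_leafC_iff.mpr hℓ'
  obtain rfl : ℓ = ℓ' := not_imp_not.mp (hℓ ℓ') (hS.trans hSℓ')
  exact hSℓ'.antisymm hS

theorem Iset_subset_Vset (Cl : W → Set Λ) (N : Set Λ) : Iset Cl N ⊆ Vset Cl N :=
  fun _ hv => hv.1

section Components

variable {Cl : W → Set Λ} {CI : ι → Set W} {M N : Set Λ} {I J : ι}

theorem inter_Vset_nonempty_or_eq_leafC (hJ : J ∈ middleSet Cl CI M N ∪ innerSet Cl CI N) :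
    (CI J ∩ Vset Cl N).Nonempty ∨ ∃ ℓ, N = {ℓ} ∧ CI J = leafC Cl ℓ := by
  rcases hJ with ⟨-, -, hmeetsV⟩ | hleaf | ⟨-, hmeetsI, -⟩
  · exact .inl hmeetsV
  · exact .inr hleaf
  · exact .inl (hmeetsI.mono (inter_subset_inter_right _ (Iset_subset_Vset Cl N)))

theorem mem_middleSet_union_innerSet_of_inter_Vset_nonempty (hI : I ∈ innerSet Cl CI M)
    (hmeets : (CI I ∩ Vset Cl N).Nonempty) :
    I ∈ middleSet Cl CI M N ∪ innerSet Cl CI N :=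
  or_iff_not_imp_right.mpr fun hinner => ⟨hI, hinner, hmeets⟩

theorem stmt11_general
    (hleaf : ∀ ℓ ℓ' : Λ, ℓ ≠ ℓ' → ¬ leafC Cl ℓ ⊆ leafC Cl ℓ')
    (hHelly : (⋂ v ∈ CI I, Cl v).Nonempty)
    (hI : I ∈ innerSet Cl CI M \ (middleSet Cl CI M N ∪ innerSet Cl CI N))
    (hJ : J ∈ middleSet Cl CI M N ∪ innerSet Cl CI N) :
    ¬ CI J ⊆ CI I := by
  obtain ⟨hIM, hI⟩ := hI
  intro hJI
  rcases inter_Vset_nonempty_or_eq_leafC hJ with hmeets | ⟨ℓ, hN, hJℓ⟩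
  · exact hI (mem_middleSet_union_innerSet_of_inter_Vset_nonempty hIM
      (hmeets.mono (inter_subset_inter_left _ hJI)))
  · have hIℓ : CI I = leafC Cl ℓ := eq_leafC_of_leafC_subset (hleaf ℓ) hHelly (hJℓ ▸ hJI)
    exact hI (.inr (.inl ⟨ℓ, hN, hIℓ⟩))

end Components

theorem stmt11 [Fintype Λ] [Fintype W] [Fintype ι]
    (Cl : W → Set Λ) (CI : ι → Set W)
    (hCl : ∀ v, (Cl v).Nonempty)
    (hleaf : ∀ ℓ ℓ' : Λ, ℓ ≠ ℓ' → ¬ leafC Cl ℓ ⊆ leafC Cl ℓ')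
    (hCI : ∀ I, (CI I).Nonempty)
    (hHelly : ∀ I, (⋂ v ∈ CI I, Cl v).Nonempty)
    (Q : Set Λ) (hQne : Q.Nonempty)
    (k : ℕ) (hk : 3 ≤ k)
    (N : ℕ → Set Λ)
    (hNne : ∀ i ∈ Set.Icc 1 k, (N i).Nonempty)
    (hNdisj : ∀ i ∈ Set.Icc 1 k, ∀ j ∈ Set.Icc 1 k, i ≠ j → N i ∩ N j = ∅)
    (hNunion : (⋃ i ∈ Set.Icc 1 k, N i) = Q)
    (hcompatQ : ∀ v, Compatible Cl v Q)
    (hcompatN : ∀ v, ∀ i ∈ Set.Icc 1 k, Compatible Cl v (N i))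
    (hJint : ∀ v ∈ IprimeQ Cl Q N k, IsIntervalIn (Jnat Cl N k v))
    (I : ι) (hI : I ∈ restQ Cl CI Q N k)
    (i : ℕ) (hi : i ∈ Set.Icc 1 k)
    (J : ι) (hJ : J ∈ middleSet Cl CI Q (N i) ∪ innerSet Cl CI (N i)) :
    ¬ CI J ⊆ CI I :=
  stmt11_general hleaf (hHelly I) ⟨hI.1, fun h => hI.2 (mem_biUnion hi h)⟩ hJ
end

section
/- Let i ≠ j in [k] be such that both N_i ⊑_Q N_j and N_j ⊑_Q N_i hold. Then for all I_1 ∈ comp(N_i) and I_2 ∈ comp(N_j), neither C(I_1) ⊆ C(I_2) nor C(I_2) ⊆ C(I_1) holds. -/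
open Set

variable {Λ W ι : Type*}

/-!
If `C(I₁) ⊆ C(I₂)` then `J(I₂) ⊆ J(I₁)`. For `I₂ ∈ comp(N_j)` the index `j` lies in `J(I₂)` and
`C(I₂)` misses `V(N_i)`. For `I₁ ∈ comp(N_i)`, on the other hand, `N_j ⊑_Q N_i` forces `j ∉ J(I₁)`
unless `I₁` is in `middle_Q(N_i)`, where `C(I₁)` meets `V(N_i)`. Hence `C(I₁) ⊄ C(I₂)`; the other
non-inclusion is the same argument with `i` and `j` exchanged.
-/

theorem sInf_mem_of_ne_zero {s : Set ℕ} (hs : sInf s ≠ 0) : sInf s ∈ s :=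
  Nat.sInf_mem (Nat.nonempty_of_pos_sInf (Nat.pos_of_ne_zero hs))

theorem bddAbove_of_sSup_ne_zero {s : Set ℕ} (hs : sSup s ≠ 0) : BddAbove s :=
  not_imp_comm.1 Nat.sSup_of_not_bddAbove hs

theorem sSup_mem_of_ne_zero {s : Set ℕ} (hs : sSup s ≠ 0) : sSup s ∈ s := by
  refine Nat.sSup_mem (nonempty_iff_ne_empty.2 ?_) (bddAbove_of_sSup_ne_zero hs)
  rintro rfl
  exact hs csSup_empty

section

variable {Cl : W → Set Λ} {CI : ι → Set W} {Q M : Set Λ} {N : ℕ → Set Λ} {k i j : ℕ} {v : W}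
  {I I₁ I₂ : ι}

theorem Compatible.subset_of_mem {ℓ : Λ} (h : Compatible Cl v M) (hv : v ∉ Vset Cl M)
    (hℓ : ℓ ∈ Cl v) (hℓM : ℓ ∈ M) : M ⊆ Cl v := by
  rcases h with h | h | h
  · exact absurd h hv
  · exact h
  · exact absurd ⟨hℓ, hℓM⟩ (eq_empty_iff_forall_notMem.1 h ℓ)

theorem JIset_subset_Jnat (hv : v ∈ CI I) (hvQ : v ∈ IprimeQ Cl Q N k) :
    JIset Cl CI Q N k I ⊆ Jnat Cl N k v :=
  biInter_subset_of_mem ⟨hv, hvQ⟩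

theorem JIset_subset_JIset (h : CI I₁ ⊆ CI I₂) :
    JIset Cl CI Q N k I₂ ⊆ JIset Cl CI Q N k I₁ :=
  biInter_subset_biInter_left (inter_subset_inter_left _ h)

namespace sqQN

theorem exists_mem_Jnat_notMem_Jnat (h : sqQN Cl Q N k j i) :
    ∃ v ∈ IprimeQ Cl Q N k, i ∈ Jnat Cl N k v ∧ j ∉ Jnat Cl N k v := by
  rcases h with ⟨-, v, hvQ, hj, hi, -⟩ | ⟨-, v, hvQ, -, hi, hj⟩
  · exact ⟨v, hvQ, hi, hj⟩
  · exact ⟨v, hvQ, hi, hj⟩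

theorem mem_Icc (h : sqQN Cl Q N k j i) : i ∈ Icc 1 k :=
  let ⟨_, _, hi, _⟩ := h.exists_mem_Jnat_notMem_Jnat
  hi.1

end sqQN

theorem mem_of_mem_innerSet_of_subset (hI : I ∈ innerSet Cl CI M) (hv : M ⊆ Cl v) :
    v ∈ CI I := by
  rcases hI with ⟨ℓ, rfl, hℓ⟩ | ⟨-, -, hUE⟩
  · rw [hℓ]
    exact hv rfl
  · exact hUE.subset (hv.eq_or_ssubset.imp Eq.symm id)

theorem exists_mem_subset_leafC_of_inter_Vset_nonempty {C : Set W}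
    (hHelly : (⋂ v ∈ C, Cl v).Nonempty) (hC : (C ∩ Vset Cl M).Nonempty) :
    ∃ ℓ ∈ M, C ⊆ leafC Cl ℓ := by
  obtain ⟨ℓ, hℓ⟩ := hHelly
  obtain ⟨u, huC, huM⟩ := hC
  exact ⟨ℓ, huM (mem_iInter₂.1 hℓ u huC), mem_iInter₂.1 hℓ⟩

theorem exists_mem_subset_leafC_of_mem_middleSet_union_innerSet
    (hHelly : (⋂ v ∈ CI I, Cl v).Nonempty) (hI : I ∈ middleSet Cl CI Q M ∪ innerSet Cl CI M) :
    ∃ ℓ ∈ M, CI I ⊆ leafC Cl ℓ := by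
  rcases hI with ⟨-, -, hV⟩ | ⟨ℓ, rfl, hℓ⟩ | ⟨-, ⟨u, huI, huM, -⟩, -⟩
  · exact exists_mem_subset_leafC_of_inter_Vset_nonempty hHelly hV
  · exact ⟨ℓ, rfl, hℓ.subset⟩
  · exact exists_mem_subset_leafC_of_inter_Vset_nonempty hHelly ⟨u, huI, huM⟩

theorem disjoint_Vset_of_mem_restQ (hi : i ∈ Icc 1 k) (hI : I ∈ restQ Cl CI Q N k) :
    Disjoint (CI I) (Vset Cl (N i)) := by
  have hmid : I ∉ middleSet Cl CI Q (N i) := fun h => hI.2 (mem_biUnion hi (.inl h))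
  have hinn : I ∉ innerSet Cl CI (N i) := fun h => hI.2 (mem_biUnion hi (.inr h))
  exact disjoint_iff_inter_eq_empty.2 <| not_nonempty_iff_eq_empty.1 fun hV =>
    hmid ⟨hI.1, hinn, hV⟩

-- `jLo` and `jHi` have the junk value `0` when `J(I)` is empty, `jHi` also when it is unbounded.
theorem mem_JIset_of_mem_outerSet (hi : i ≠ 0) (hI : I ∈ outerSet Cl CI Q N k i) :
    i ∈ JIset Cl CI Q N k I := by
  rcases hI.2.2 with ⟨-, rfl⟩ | ⟨-, rfl, -⟩ | ⟨-, rfl, -⟩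
  · exact sInf_mem_of_ne_zero hi
  · exact sInf_mem_of_ne_zero hi
  · exact sSup_mem_of_ne_zero hi

theorem mem_of_mem_outerSet_of_lt (hI : I ∈ outerSet Cl CI Q N k i)
    (hj : j ∈ JIset Cl CI Q N k I) (hji : j < i) (hvQ : v ∈ IprimeQ Cl Q N k)
    (hi : i ∈ Jnat Cl N k v) (hsucc : i + 1 ∈ Jnat Cl N k v) : v ∈ CI I := by
  have hlo : jLo Cl CI Q N k I < i := (Nat.sInf_le hj).trans_lt hji
  rcases hI.2.2 with ⟨-, h⟩ | ⟨-, h, -⟩ | ⟨-, rfl, hcover⟩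
  · exact absurd h hlo.ne'
  · exact absurd h hlo.ne'
  · by_contra hv
    exact hcover ⟨v, ⟨hvQ, hv⟩, hi, hsucc⟩

theorem mem_of_mem_outerSet_of_gt (hI : I ∈ outerSet Cl CI Q N k i)
    (hj : j ∈ JIset Cl CI Q N k I) (hij : i < j) (hvQ : v ∈ IprimeQ Cl Q N k)
    (hpred : i - 1 ∈ Jnat Cl N k v) (hi : i ∈ Jnat Cl N k v) : v ∈ CI I := by
  have hhi (h : i ≤ jHi Cl CI Q N k I) : i < jHi Cl CI Q N k I := by
    have hne : jHi Cl CI Q N k I ≠ 0 := Nat.one_le_iff_ne_zero.1 (hi.1.1.trans h)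
    exact hij.trans_le (le_csSup (bddAbove_of_sSup_ne_zero hne) hj)
  rcases hI.2.2 with ⟨hlohi, h⟩ | ⟨-, rfl, hcover⟩ | ⟨-, h, -⟩
  · exact absurd (h.trans hlohi) (hhi (h.trans hlohi).le).ne
  · by_contra hv
    exact hcover ⟨v, ⟨hvQ, hv⟩, hpred, hi⟩
  · exact absurd h (hhi h.le).ne

theorem mem_JIset_of_mem_compSet (hHelly : (⋂ v ∈ CI I, Cl v).Nonempty)
    (hcompat : ∀ v, Compatible Cl v (N i)) (hi : i ∈ Icc 1 k)
    (hI : I ∈ compSet Cl CI Q N k i) : i ∈ JIset Cl CI Q N k I := by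
  rcases hI with hI | hI
  · obtain ⟨ℓ, hℓ, hIℓ⟩ := exists_mem_subset_leafC_of_mem_middleSet_union_innerSet hHelly hI
    refine mem_iInter₂.2 fun v hv => ⟨hi, ?_⟩
    have hvV : v ∉ Vset Cl (N i) := fun h => hv.2.2 (mem_biUnion hi h)
    exact (hcompat v).subset_of_mem hvV (hIℓ hv.1) hℓ
  · exact mem_JIset_of_mem_outerSet (Nat.one_le_iff_ne_zero.1 hi.1) hI

theorem disjoint_Vset_of_mem_compSet (hHelly : (⋂ v ∈ CI I, Cl v).Nonempty)
    (hN : Disjoint (N i) (N j)) (hi : i ∈ Icc 1 k) (hI : I ∈ compSet Cl CI Q N k j) :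
    Disjoint (CI I) (Vset Cl (N i)) := by
  rcases hI with hI | hI
  · obtain ⟨ℓ, hℓ, hIℓ⟩ := exists_mem_subset_leafC_of_mem_middleSet_union_innerSet hHelly hI
    exact disjoint_left.2 fun v hvI hvV => disjoint_left.1 hN (hvV (hIℓ hvI)) hℓ
  · exact disjoint_Vset_of_mem_restQ hi hI.1

theorem notMem_JIset_of_mem_innerSet (h : sqQN Cl Q N k j i)
    (hI : I ∈ innerSet Cl CI (N i)) : j ∉ JIset Cl CI Q N k I := by
  obtain ⟨v, hvQ, hi, hj⟩ := h.exists_mem_Jnat_notMem_Jnat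
  exact fun hjI => hj (JIset_subset_Jnat (mem_of_mem_innerSet_of_subset hI hi.2) hvQ hjI)

theorem notMem_JIset_of_mem_outerSet (h : sqQN Cl Q N k j i)
    (hI : I ∈ outerSet Cl CI Q N k i) : j ∉ JIset Cl CI Q N k I := by
  intro hjI
  rcases h with ⟨hji, v, hvQ, hj, hi, hsucc⟩ | ⟨hij, v, hvQ, hpred, hi, hj⟩
  · exact hj (JIset_subset_Jnat (mem_of_mem_outerSet_of_lt hI hjI hji hvQ hi hsucc) hvQ hjI)
  · exact hj (JIset_subset_Jnat (mem_of_mem_outerSet_of_gt hI hjI hij hvQ hpred hi) hvQ hjI)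

theorem inter_Vset_nonempty_of_mem_JIset (h : sqQN Cl Q N k j i)
    (hI : I ∈ compSet Cl CI Q N k i) (hj : j ∈ JIset Cl CI Q N k I) :
    (CI I ∩ Vset Cl (N i)).Nonempty := by
  rcases hI with (⟨-, -, hV⟩ | hI) | hI
  · exact hV
  · exact absurd hj (notMem_JIset_of_mem_innerSet h hI)
  · exact absurd hj (notMem_JIset_of_mem_outerSet h hI)

theorem stmt14_general (hHelly : (⋂ v ∈ CI I₂, Cl v).Nonempty)
    (hN : Disjoint (N i) (N j)) (hcompat : ∀ v, Compatible Cl v (N j)) (hj : j ∈ Icc 1 k)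
    (h : sqQN Cl Q N k j i) (hI₁ : I₁ ∈ compSet Cl CI Q N k i)
    (hI₂ : I₂ ∈ compSet Cl CI Q N k j) : ¬ CI I₁ ⊆ CI I₂ := by
  intro hsub
  have hjI₁ : j ∈ JIset Cl CI Q N k I₁ :=
    JIset_subset_JIset hsub (mem_JIset_of_mem_compSet hHelly hcompat hj hI₂)
  obtain ⟨v, hvI₁, hvV⟩ := inter_Vset_nonempty_of_mem_JIset h hI₁ hjI₁
  exact disjoint_left.1 (disjoint_Vset_of_mem_compSet hHelly hN h.mem_Icc hI₂) (hsub hvI₁) hvV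

end

theorem stmt14 [Fintype Λ] [Fintype W] [Fintype ι]
    (Cl : W → Set Λ) (CI : ι → Set W)
    (hCl : ∀ v, (Cl v).Nonempty)
    (hleaf : ∀ ℓ ℓ' : Λ, ℓ ≠ ℓ' → ¬ leafC Cl ℓ ⊆ leafC Cl ℓ')
    (hCI : ∀ I, (CI I).Nonempty)
    (hHelly : ∀ I, (⋂ v ∈ CI I, Cl v).Nonempty)
    (Q : Set Λ) (hQne : Q.Nonempty)
    (k : ℕ) (hk : 3 ≤ k)
    (N : ℕ → Set Λ)
    (hNne : ∀ i ∈ Set.Icc 1 k, (N i).Nonempty)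
    (hNdisj : ∀ i ∈ Set.Icc 1 k, ∀ j ∈ Set.Icc 1 k, i ≠ j → N i ∩ N j = ∅)
    (hNunion : (⋃ i ∈ Set.Icc 1 k, N i) = Q)
    (hcompatQ : ∀ v, Compatible Cl v Q)
    (hcompatN : ∀ v, ∀ i ∈ Set.Icc 1 k, Compatible Cl v (N i))
    (hJint : ∀ v ∈ IprimeQ Cl Q N k, IsIntervalIn (Jnat Cl N k v))
    (hQprop : ∀ j₁ j₂ : ℕ, 1 ≤ j₁ → j₁ < j₂ → j₂ ≤ k → (j₁, j₂) ≠ (1, k) →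
      ∃ v ∈ IprimeQ Cl Q N k,
        (j₁ ∉ Jnat Cl N k v ∧ j₂ ∈ Jnat Cl N k v ∧ j₂ + 1 ∈ Jnat Cl N k v) ∨
        (j₁ - 1 ∈ Jnat Cl N k v ∧ j₁ ∈ Jnat Cl N k v ∧ j₂ ∉ Jnat Cl N k v))
    (i j : ℕ) (hi : i ∈ Set.Icc 1 k) (hj : j ∈ Set.Icc 1 k) (hij : i ≠ j)
    (hQij : sqQN Cl Q N k i j) (hQji : sqQN Cl Q N k j i) :
    ∀ I₁ ∈ compSet Cl CI Q N k i, ∀ I₂ ∈ compSet Cl CI Q N k j,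
      ¬ CI I₁ ⊆ CI I₂ ∧ ¬ CI I₂ ⊆ CI I₁ := by
  have hdisj : Disjoint (N i) (N j) := disjoint_iff_inter_eq_empty.2 (hNdisj i hi j hj hij)
  exact fun I₁ hI₁ I₂ hI₂ =>
    ⟨stmt14_general (hHelly I₂) hdisj (hcompatN · j hj) hj hQji hI₁ hI₂,
      stmt14_general (hHelly I₁) hdisj.symm (hcompatN · i hi) hi hQij hI₂ hI₁⟩
end
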